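/- arXiv:1712.03546 — 3 statements merged into one kernel-verified Lean document; each statement's English description precedes it below -/
import Mathlib

section
/- Let f be a homogeneous polynomial of degree 3 in n variables over ℂ, and let v, w ∈ ℂⁿ. Then f vanishes identically on the span of v and w (i.e. f(s·v + t·w) = 0 for all s, t ∈ ℂ) if and only if the four conditions hold: f(v) = 0, f(w) = 0, Σᵢ wᵢ·(∂f/∂xᵢ)(v) = 0, and Σᵢ vᵢ·(∂f/∂xᵢ)(w) = 0. -/
open MvPolynomial

/-!
Restricting `f` to the span of `v` and `w` gives the binary cubic form `F(s, t) = f(s v + t w)`.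
Its coefficients at `s³` and `s²t` are `F(1, 0) = f(v)` and `∂ₜF(1, 0)`, and the chain rule
identifies the latter with `∑ᵢ wᵢ ∂ᵢf(v)`; the other two arise by exchanging `v` and `w`.
A binary cubic form vanishing at `(1, 0)`, `(0, 1)`, `(1, 1)` and `(1, r)` is zero
as soon as `r (r - 1)` is not a zero divisor; any `r ≠ 0, 1` in a domain will do.
-/

section ChainRule

variable {R A M σ : Type*} [CommSemiring R] [CommSemiring A] [Algebra R A]
  [AddCommMonoid M] [Module A M] [Module R M] [Fintype σ]

theorem derivation_aeval_eq_sum_pderiv (D : Derivation R A M) (g : σ → A)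
    (f : MvPolynomial σ R) :
    D (aeval g f) = ∑ i, aeval g (pderiv i f) • D (g i) := by
  classical
  induction f using MvPolynomial.induction_on with
  | C a => simp [← algebraMap_eq]
  | add p q hp hq => simp only [map_add, hp, hq, add_smul, Finset.sum_add_distrib]
  | mul_X p j hp =>
    have sum_pderiv_X : ∑ i, aeval g (pderiv i (X j : MvPolynomial σ R)) • D (g i) = D (g j) := by
      simp [pderiv_X, Pi.single_apply, apply_ite]
    simp only [map_mul, aeval_X, Derivation.leibniz, hp, smul_eq_mul, map_add, add_smul,
      mul_smul, Finset.sum_add_distrib, ← Finset.smul_sum, sum_pderiv_X]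

end ChainRule

section HomogeneousCoefficients

variable {R σ : Type*} [CommSemiring R] [DecidableEq σ] {F : MvPolynomial σ R} {d : ℕ}

theorem coeff_single_eq_eval_single_one (hF : F.IsHomogeneous d) (i : σ) :
    F.coeff (Finsupp.single i d) = eval (Pi.single i 1) F := by
  rw [eval_eq, Finset.sum_eq_single (Finsupp.single i d)]
  · by_cases hd : d = 0 <;> simp [hd]
  · intro m hm hne
    suffices ∃ j ∈ m.support, j ≠ i by
      obtain ⟨j, hj, hji⟩ := this
      rw [Finset.prod_eq_zero hj, mul_zero]
      simp [hji, Finsupp.mem_support_iff.mp hj]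
    by_contra! hsupp
    obtain ⟨k, rfl⟩ := Finsupp.support_subset_singleton'.mp
      (fun j hj ↦ Finset.mem_singleton.mpr (hsupp j hj))
    have hk : k = d := by
      simpa [Finsupp.weight_single] using hF (mem_support_iff.mp hm)
    exact hne (by rw [hk])
  · simp +contextual

theorem coeff_single_add_single_one_eq_eval_pderiv (hF : F.IsHomogeneous (d + 1)) {i j : σ}
    (hij : i ≠ j) :
    F.coeff (Finsupp.single i d + Finsupp.single j 1) = eval (Pi.single i 1) (pderiv j F) := by
  have hpderiv : (pderiv j F).IsHomogeneous d := hF.pderiv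
  rw [← coeff_single_eq_eval_single_one hpderiv, coeff_pderiv]
  simp [hij]

theorem eval_binary_form_eq_sum_antidiagonal {F : MvPolynomial (Fin 2) R} (hF : F.IsHomogeneous d)
    (x : Fin 2 → R) :
    eval x F = ∑ kl ∈ Finset.HasAntidiagonal.antidiagonal d,
      F.coeff (Finsupp.single 0 kl.1 + Finsupp.single 1 kl.2) * (x 0 ^ kl.1 * x 1 ^ kl.2) := by
  have exponent_eq (m : Fin 2 →₀ ℕ) : Finsupp.single 0 (m 0) + Finsupp.single 1 (m 1) = m := by
    ext i
    fin_cases i <;> simp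
  rw [eval_eq']
  refine Finset.sum_of_injOn (fun m ↦ (m 0, m 1)) ?_ ?_ ?_ ?_
  · intro m _ m' _ h
    obtain ⟨h₀, h₁⟩ := Prod.mk.inj h
    rw [← exponent_eq m, ← exponent_eq m', h₀, h₁]
  · intro m hm
    simpa [Finsupp.weight_apply, Finsupp.sum_fintype] using hF (mem_support_iff.mp hm)
  · intro kl _ hkl
    rw [notMem_support_iff.mp, zero_mul]
    exact fun hmem ↦ hkl ⟨_, hmem, by simp⟩
  · intro m _
    simp only [exponent_eq, Fin.prod_univ_two]

end HomogeneousCoefficients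

section RestrictToSpan

variable {R σ ι : Type*} [CommSemiring R] [Fintype ι]

/-- The restriction of a polynomial to the span of a family of vectors `u`: the polynomial
`f (∑ j, X j • u j)` in formal coordinates `X j`, whether or not `u` is linearly independent. -/
noncomputable def restrictToSpan (u : ι → σ → R) : MvPolynomial σ R →ₐ[R] MvPolynomial ι R :=
  aeval fun i ↦ ∑ j, C (u j i) * X j

theorem isHomogeneous_restrictToSpan (u : ι → σ → R) {f : MvPolynomial σ R} {d : ℕ}
    (hf : f.IsHomogeneous d) : (restrictToSpan u f).IsHomogeneous d := by
  have hlinear (i : σ) : (∑ j, C (u j i) * X j : MvPolynomial ι R).IsHomogeneous 1 :=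
    IsHomogeneous.sum _ _ _ fun j _ ↦ isHomogeneous_C_mul_X (u j i) j
  simpa only [restrictToSpan, one_mul] using hf.aeval _ hlinear

theorem eval_restrictToSpan (u : ι → σ → R) (x : ι → R) (f : MvPolynomial σ R) :
    eval x (restrictToSpan u f) = eval (∑ j, x j • u j) f := by
  have hpoint : (fun i ↦ eval x (∑ j, C (u j i) * X j)) = ∑ j, x j • u j := by
    ext i
    simp [mul_comm]
  have hscalar : (eval x).comp (algebraMap R (MvPolynomial ι R)) = RingHom.id R := by
    ext a
    simp
  rw [restrictToSpan, map_aeval, hpoint, hscalar]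
  rfl

theorem eval_pderiv_restrictToSpan [Fintype σ] (u : ι → σ → R) (x : ι → R) (j : ι)
    (f : MvPolynomial σ R) :
    eval x (pderiv j (restrictToSpan u f)) = ∑ i, u j i * eval (∑ k, x k • u k) (pderiv i f) := by
  classical
  have hlinear (i : σ) : pderiv j (∑ k, C (u k i) * X k : MvPolynomial ι R) = C (u j i) := by
    simp [pderiv_X, Pi.single_apply]
  rw [restrictToSpan, derivation_aeval_eq_sum_pderiv, ← restrictToSpan, map_sum]
  refine Finset.sum_congr rfl fun i _ ↦ ?_
  rw [hlinear, smul_eq_mul, mul_comm, map_mul, eval_C, eval_restrictToSpan]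

variable {f : MvPolynomial σ R} {d : ℕ}

theorem coeff_single_restrictToSpan (hf : f.IsHomogeneous d) (u : ι → σ → R) (j : ι) :
    (restrictToSpan u f).coeff (Finsupp.single j d) = eval (u j) f := by
  classical
  rw [coeff_single_eq_eval_single_one (isHomogeneous_restrictToSpan u hf), eval_restrictToSpan]
  simp [Pi.single_apply]

theorem coeff_single_add_single_one_restrictToSpan [Fintype σ] (hf : f.IsHomogeneous (d + 1))
    (u : ι → σ → R) {j k : ι} (hjk : j ≠ k) :
    (restrictToSpan u f).coeff (Finsupp.single j d + Finsupp.single k 1) =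
      ∑ i, u k i * eval (u j) (pderiv i f) := by
  classical
  rw [coeff_single_add_single_one_eq_eval_pderiv (isHomogeneous_restrictToSpan u hf) hjk,
    eval_pderiv_restrictToSpan]
  simp [Pi.single_apply]

end RestrictToSpan

section Cubic

theorem eval_smul_add_smul_of_isHomogeneous_three {R σ : Type*} [CommSemiring R] [Fintype σ]
    {f : MvPolynomial σ R} (hf : f.IsHomogeneous 3) (v w : σ → R) (s t : R) :
    eval (s • v + t • w) f =
      eval v f * s ^ 3 + (∑ i, w i * eval v (pderiv i f)) * (s ^ 2 * t) +
        (∑ i, v i * eval w (pderiv i f)) * (s * t ^ 2) + eval w f * t ^ 3 := by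
  have hs3 := coeff_single_restrictToSpan hf ![v, w] 0
  have ht3 := coeff_single_restrictToSpan hf ![v, w] 1
  have hs2t := coeff_single_add_single_one_restrictToSpan hf ![v, w] zero_ne_one
  have hst2 := coeff_single_add_single_one_restrictToSpan hf ![v, w] one_ne_zero
  rw [add_comm (Finsupp.single 1 2)] at hst2
  calc eval (s • v + t • w) f
    _ = eval ![s, t] (restrictToSpan ![v, w] f) := by simp [eval_restrictToSpan]
    _ = _ := eval_binary_form_eq_sum_antidiagonal (isHomogeneous_restrictToSpan ![v, w] hf) ![s, t]
    _ = _ := by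
      simp [Finset.Nat.antidiagonal_succ, hs3, hs2t, hst2, ht3]
      ring

variable {R : Type*} [CommRing R] {r : R}

theorem forall_binary_cubic_eq_zero_iff (hr : r * (r - 1) ∈ nonZeroDivisors R) (a b c d : R) :
    (∀ s t : R, a * s ^ 3 + b * (s ^ 2 * t) + c * (s * t ^ 2) + d * t ^ 3 = 0) ↔
      a = 0 ∧ d = 0 ∧ b = 0 ∧ c = 0 := by
  constructor
  · intro h
    have ha : a = 0 := by simpa using h 1 0
    have hd : d = 0 := by simpa using h 0 1
    have hbc : b + c = 0 := by simpa [ha, hd] using h 1 1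
    have hc : c = 0 := by
      refine (mul_right_mem_nonZeroDivisors_eq_zero_iff hr).mp ?_
      linear_combination h 1 r - ha - r ^ 3 * hd - r * hbc
    exact ⟨ha, hd, by simpa [hc] using hbc, hc⟩
  · rintro ⟨rfl, rfl, rfl, rfl⟩ s t
    ring

theorem cubic_vanishes_on_span_iff_general {σ : Type*} [Fintype σ]
    (hr : r * (r - 1) ∈ nonZeroDivisors R) {f : MvPolynomial σ R} (hf : f.IsHomogeneous 3)
    (v w : σ → R) :
    (∀ s t : R, eval (s • v + t • w) f = 0) ↔
      (eval v f = 0 ∧ eval w f = 0 ∧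
        (∑ i, w i * eval v (pderiv i f)) = 0 ∧
        (∑ i, v i * eval w (pderiv i f)) = 0) := by
  simp only [eval_smul_add_smul_of_isHomogeneous_three hf]
  exact forall_binary_cubic_eq_zero_iff hr _ _ _ _

end Cubic

/-- A homogeneous cubic `f` vanishes identically on the span of
`v` and `w` iff `f(v) = 0`, `f(w) = 0`, `Σᵢ wᵢ ∂ᵢf(v) = 0` and
`Σᵢ vᵢ ∂ᵢf(w) = 0`. -/
theorem cubic_vanishes_on_span_iff (n : ℕ) (f : MvPolynomial (Fin n) ℂ)
    (hf : f.IsHomogeneous 3) (v w : Fin n → ℂ) :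
    (∀ s t : ℂ, eval (s • v + t • w) f = 0) ↔
      (eval v f = 0 ∧ eval w f = 0 ∧
        (∑ i, w i * eval v (pderiv i f)) = 0 ∧
        (∑ i, v i * eval w (pderiv i f)) = 0) :=
  cubic_vanishes_on_span_iff_general (r := 2) (by norm_num) hf v w
end

section
/- Let f2 and f3 be homogeneous polynomials of degrees 2 and 3 in the variables x0,...,x4 over ℂ, regarded as polynomials in x0,...,x5 not involving x5, and set f = x5·f2 + f3, a homogeneous cubic in six variables. Then for every v ∈ ℂ⁵ and all s, t ∈ ℂ one has f(s·(v,0) + t·e5) = s³·f3(v) + s²·t·f2(v), where (v,0) ∈ ℂ⁶ denotes v with last coordinate 0 and e5 = (0,0,0,0,0,1). Consequently, for v ≠ 0, the line spanned by (v,0) and e5 is contained in the hypersurface {f = 0} if and only if f2(v) = 0 and f3(v) = 0. -/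
open MvPolynomial

section

variable {R σ : Type*} [CommSemiring R]

theorem eval_smul_of_isHomogeneous {p : MvPolynomial σ R} {d : ℕ} (hp : p.IsHomogeneous d)
    (s : R) (v : σ → R) : eval (s • v) p = s ^ d * eval v p := by
  rw [eval_eq, eval_eq, Finset.mul_sum]
  refine Finset.sum_congr rfl fun m hm => ?_
  have degree_eq : ∑ i ∈ m.support, m i = d := (hp.degree_eq_sum_deg_support hm).symm
  simp only [Pi.smul_apply, smul_eq_mul, mul_pow, Finset.prod_mul_distrib,
    Finset.prod_pow_eq_pow_sum, degree_eq]
  exact mul_left_comm _ _ _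

theorem smul_snoc_zero_add_smul_single_last {n : ℕ} (v : Fin n → R) (s t : R) :
    s • (Fin.snoc v 0 : Fin (n + 1) → R) + t • Pi.single (Fin.last n) 1 =
      Fin.snoc (s • v) t := by
  ext i
  refine Fin.lastCases ?_ (fun j => ?_) i <;> simp

theorem eval_snoc_X_last_mul_rename_add_rename {n : ℕ} (p q : MvPolynomial (Fin n) R)
    (v : Fin n → R) (t : R) :
    eval (Fin.snoc v t : Fin (n + 1) → R)
        (X (Fin.last n) * rename Fin.castSucc p + rename Fin.castSucc q) =
      t * eval v p + eval v q := by
  simp only [map_add, map_mul, eval_X, eval_rename, Fin.snoc_last, Fin.snoc_comp_castSucc]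

theorem forall_pow_mul_add_pow_mul_mul_eq_zero_iff (d e : ℕ) (a b : R) :
    (∀ s t : R, s ^ e * b + s ^ d * t * a = 0) ↔ a = 0 ∧ b = 0 := by
  refine ⟨fun h => ?_, fun ⟨ha, hb⟩ s t => by simp [ha, hb]⟩
  have hb : b = 0 := by simpa using h 1 0
  have ha : a = 0 := by simpa [hb] using h 1 1
  exact ⟨ha, hb⟩

theorem lines_through_singular_point_equations_general {n d e : ℕ}
    {p q : MvPolynomial (Fin n) R} (hp : p.IsHomogeneous d) (hq : q.IsHomogeneous e)
    {f : MvPolynomial (Fin (n + 1)) R}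
    (hf : f = X (Fin.last n) * rename Fin.castSucc p + rename Fin.castSucc q) :
    (∀ (v : Fin n → R) (s t : R),
        eval (s • (Fin.snoc v 0 : Fin (n + 1) → R) + t • Pi.single (Fin.last n) 1) f =
          s ^ e * eval v q + s ^ d * t * eval v p) ∧
    (∀ v : Fin n → R,
        ((∀ s t : R,
            eval (s • (Fin.snoc v 0 : Fin (n + 1) → R) + t • Pi.single (Fin.last n) 1) f = 0) ↔
          (eval v p = 0 ∧ eval v q = 0))) := by
  have eval_on_line (v : Fin n → R) (s t : R) :
      eval (s • (Fin.snoc v 0 : Fin (n + 1) → R) + t • Pi.single (Fin.last n) 1) f =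
        s ^ e * eval v q + s ^ d * t * eval v p := by
    rw [hf, smul_snoc_zero_add_smul_single_last, eval_snoc_X_last_mul_rename_add_rename,
      eval_smul_of_isHomogeneous hp, eval_smul_of_isHomogeneous hq]
    ring
  refine ⟨eval_on_line, fun v => ?_⟩
  simp only [eval_on_line, forall_pow_mul_add_pow_mul_mul_eq_zero_iff]

end

/-- For `f = x₅·f₂ + f₃` with `f₂, f₃` homogeneous of degrees 2, 3
in `x₀,…,x₄`, one has `f(s·(v,0) + t·e₅) = s³·f₃(v) + s²·t·f₂(v)`; hence, for
`v ≠ 0`, the line spanned by `(v,0)` and `e₅` lies on `{f = 0}` iff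
`f₂(v) = 0` and `f₃(v) = 0`. -/
theorem lines_through_singular_point_equations
    (f2 f3 : MvPolynomial (Fin 5) ℂ)
    (hf2 : f2.IsHomogeneous 2) (hf3 : f3.IsHomogeneous 3)
    (f : MvPolynomial (Fin 6) ℂ)
    (hf : f = X 5 * rename Fin.castSucc f2 + rename Fin.castSucc f3)
    (e5 : Fin 6 → ℂ) (he5 : e5 = fun i => if i = 5 then 1 else 0) :
    (∀ (v : Fin 5 → ℂ) (s t : ℂ),
        eval (s • (Fin.snoc v 0 : Fin 6 → ℂ) + t • e5) f =
          s ^ 3 * eval v f3 + s ^ 2 * t * eval v f2) ∧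
    (∀ v : Fin 5 → ℂ, v ≠ 0 →
        ((∀ s t : ℂ, eval (s • (Fin.snoc v 0 : Fin 6 → ℂ) + t • e5) f = 0) ↔
          (eval v f2 = 0 ∧ eval v f3 = 0))) := by
  obtain rfl : e5 = Pi.single (Fin.last 5) 1 :=
    he5.trans (funext fun i => (Pi.single_apply _ _ i).symm)
  have ⟨eval_on_line, line_subset_iff⟩ := lines_through_singular_point_equations_general hf2 hf3 hf
  exact ⟨eval_on_line, fun v _ => line_subset_iff v⟩
end

section
/- Let f be a homogeneous polynomial of degree 3 in the six variables x0,...,x5 over ℂ that vanishes identically on the subspace l = {x0 = x1 = x2 = x3 = 0}, and let g0, g1, g2, g3 be homogeneous degree-2 polynomials in the variables x4, x5 only such that f − Σᵢ₌₀³ xᵢ·gᵢ ∈ (x0,x1,x2,x3)². If additionally all partial derivatives of f vanish at the point e5 = (0,0,0,0,0,1) (so p = [0:...:0:1] is a singular point of {f = 0}), then each gᵢ is divisible by x4, i.e. gᵢ(0,0,0,0,x4,x5) has zero coefficient of x5². -/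
open MvPolynomial

/-!
A derivation maps `I ^ 2` into `I`. With `I = (x₀, …, x₃)`, differentiating
`f ≡ Σ xᵢ gᵢ mod I ^ 2` with respect to `xᵢ` and evaluating at a point `p` of the line `V(I)` gives
`∂ᵢf(p) = gᵢ(p)`. At `p = e₅` the value of the form `gᵢ` is its coefficient of `x₅²`. When this
vanishes, every monomial of `gᵢ`, being of degree `2` in `x₄, x₅`, contains `x₄`.
-/

section Derivation

variable {R A : Type*} [CommSemiring R] [CommSemiring A] [Algebra R A]

lemma derivation_mem_of_mem_sq (D : Derivation R A A) {I : Ideal A} {x : A} (hx : x ∈ I ^ 2) :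
    D x ∈ I := by
  rw [pow_two] at hx
  induction hx using Submodule.mul_induction_on' with
  | mem_mul_mem a ha b hb =>
    rw [D.leibniz]
    exact I.add_mem (I.mul_mem_right _ ha) (I.mul_mem_right _ hb)
  | add x _ y _ hx hy =>
    rw [map_add]
    exact I.add_mem hx hy

end Derivation

section Semiring

variable {R σ ι : Type*} [CommSemiring R]

lemma exists_ne_zero_of_ne_single_degree {m : σ →₀ ℕ} {b : σ}
    (hm : m ≠ Finsupp.single b m.degree) : ∃ j ≠ b, m j ≠ 0 := by
  contrapose! hm
  have m_eq : m = Finsupp.single b (m b) := by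
    ext j
    by_cases hj : j = b
    · simp [hj]
    · simp [hj, hm j hj]
  have degree_eq : m.degree = m b := by
    rw [m_eq, Finsupp.degree_single, Finsupp.single_eq_same]
  rwa [degree_eq]

lemma exists_ne_zero_of_mem_support_of_ne_single {φ : MvPolynomial σ R} {n : ℕ}
    (hφ : φ.IsHomogeneous n) {m : σ →₀ ℕ} (hm : m ∈ φ.support) {b : σ}
    (hne : m ≠ Finsupp.single b n) : ∃ j ≠ b, m j ≠ 0 := by
  have degree_eq : m.degree = n := by
    by_contra h
    exact mem_support_iff.mp hm (hφ.coeff_eq_zero h)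
  subst degree_eq
  exact exists_ne_zero_of_ne_single_degree hne

lemma eval_piSingle_of_isHomogeneous [DecidableEq σ] {φ : MvPolynomial σ R} {n : ℕ}
    (hφ : φ.IsHomogeneous n) (b : σ) :
    eval (Pi.single b 1) φ = coeff (Finsupp.single b n) φ := by
  rw [eval_eq, Finset.sum_eq_single (Finsupp.single b n)]
  · rw [Finset.prod_eq_one, mul_one]
    intro j hj
    obtain rfl : j = b := Finset.mem_singleton.mp (Finsupp.support_single_subset hj)
    rw [Pi.single_eq_same, one_pow]
  · intro m hm hne
    obtain ⟨j, hjb, hmj⟩ := exists_ne_zero_of_mem_support_of_ne_single hφ hm hne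
    rw [Finset.prod_eq_zero (Finsupp.mem_support_iff.mpr hmj), mul_zero]
    rw [Pi.single_eq_of_ne hjb, zero_pow hmj]
  · intro hm
    rw [notMem_support_iff.mp hm, zero_mul]

lemma mem_span_X_image_of_coeff_single_eq_zero {φ : MvPolynomial σ R} {n : ℕ}
    (hφ : φ.IsHomogeneous n) {b : σ} {t : Set σ} (hsupp : φ ∈ supported R (insert b t))
    (hcoeff : coeff (Finsupp.single b n) φ = 0) :
    φ ∈ Ideal.span (X '' t : Set (MvPolynomial σ R)) := by
  rw [mem_ideal_span_X_image]
  intro m hm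
  have hne : m ≠ Finsupp.single b n := by
    rintro rfl
    exact mem_support_iff.mp hm hcoeff
  obtain ⟨j, hjb, hmj⟩ := exists_ne_zero_of_mem_support_of_ne_single hφ hm hne
  have hj : j ∈ φ.vars := mem_vars_iff_mem_support j |>.mpr
    ⟨m, hm, Finsupp.mem_support_iff.mpr hmj⟩
  exact ⟨j, (mem_supported.mp hsupp hj).resolve_left hjb, hmj⟩

lemma eval_eq_zero_of_mem_span_range_X {v : ι → σ} {p : σ → R} (hp : ∀ i, p (v i) = 0)
    {φ : MvPolynomial σ R}
    (hφ : φ ∈ Ideal.span (Set.range fun i => (X (v i) : MvPolynomial σ R))) : eval p φ = 0 := by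
  suffices h : Ideal.span (Set.range fun i => (X (v i) : MvPolynomial σ R)) ≤
      RingHom.ker (eval p) from h hφ
  rw [Ideal.span_le]
  rintro _ ⟨i, rfl⟩
  simp [hp]

lemma eval_pderiv_sum_X_mul [Fintype ι] {v : ι → σ} (hv : Function.Injective v) {p : σ → R}
    (hp : ∀ i, p (v i) = 0) (g : ι → MvPolynomial σ R) (i : ι) :
    eval p (pderiv (v i) (∑ j, X (v j) * g j)) = eval p (g i) := by
  classical
  simp [pderiv_X, Pi.single_apply, hp, hv.eq_iff, apply_ite (eval p)]

lemma rename_pair_mem_supported (a b : σ) (φ : MvPolynomial (Fin 2) R) :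
    rename ![a, b] φ ∈ supported R {a, b} := by
  rw [mem_supported]
  intro j hj
  obtain ⟨k, -, rfl⟩ := mem_vars_rename _ φ hj
  fin_cases k <;> simp

lemma range_X_castLE_four_six :
    (Set.range fun i : Fin 4 => (X (Fin.castLE (by norm_num) i) : MvPolynomial (Fin 6) R)) =
      {X 0, X 1, X 2, X 3} := by
  ext φ
  simp [Fin.exists_fin_succ, eq_comm]

end Semiring

section Ring

variable {R σ ι : Type*} [CommRing R] [Fintype ι] {v : ι → σ}
  {f : MvPolynomial σ R} {g : ι → MvPolynomial σ R}

lemma eval_pderiv_eq_eval_of_sub_sum_mem_sq (hv : Function.Injective v)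
    (hfg : f - ∑ i, X (v i) * g i ∈
      Ideal.span (Set.range fun i => (X (v i) : MvPolynomial σ R)) ^ 2)
    {p : σ → R} (hp : ∀ i, p (v i) = 0) (i : ι) :
    eval p (pderiv (v i) f) = eval p (g i) := by
  have hsub := eval_eq_zero_of_mem_span_range_X hp (derivation_mem_of_mem_sq (pderiv (v i)) hfg)
  rwa [map_sub, map_sub, sub_eq_zero, eval_pderiv_sum_X_mul hv hp] at hsub

theorem g_divisible_by_x4_at_singular_point_general [DecidableEq σ] (hv : Function.Injective v)
    {a b : σ} (hb : b ∉ Set.range v) {n : ℕ} (hg : ∀ i, (g i).IsHomogeneous n)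
    (hsupp : ∀ i, g i ∈ supported R {a, b})
    (hfg : f - ∑ i, X (v i) * g i ∈
      Ideal.span (Set.range fun i => (X (v i) : MvPolynomial σ R)) ^ 2)
    (hsing : ∀ i, eval (Pi.single b 1) (pderiv (v i) f) = 0) (i : ι) :
    X a ∣ g i ∧ coeff (Finsupp.single b n) (g i) = 0 := by
  have vanish : ∀ j, (Pi.single b 1 : σ → R) (v j) = 0 := fun j =>
    Pi.single_eq_of_ne (fun h => hb ⟨j, h⟩) 1
  have coeff_eq_zero : coeff (Finsupp.single b n) (g i) = 0 := by
    rw [← eval_piSingle_of_isHomogeneous (hg i),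
      ← eval_pderiv_eq_eval_of_sub_sum_mem_sq hv hfg vanish, hsing]
  refine ⟨?_, coeff_eq_zero⟩
  rw [← Ideal.mem_span_singleton, ← Set.image_singleton]
  exact mem_span_X_image_of_coeff_single_eq_zero (hg i) (Set.pair_comm a b ▸ hsupp i) coeff_eq_zero

end Ring

/-- With `f` a homogeneous cubic vanishing on
`l = {x₀ = x₁ = x₂ = x₃ = 0}` and `g₀,…,g₃` homogeneous quadrics in `x₄, x₅`
only with `f − Σ xᵢ·gᵢ ∈ (x₀,…,x₃)²`, if moreover all partial derivatives of
`f` vanish at `e₅ = (0,0,0,0,0,1)`, then each `gᵢ` is divisible by `x₄`,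
i.e. the coefficient of `x₅²` in `gᵢ` is zero. -/
theorem g_divisible_by_x4_at_singular_point
    (f : MvPolynomial (Fin 6) ℂ) (hf : f.IsHomogeneous 3)
    (hl : ∀ x : Fin 6 → ℂ, x 0 = 0 → x 1 = 0 → x 2 = 0 → x 3 = 0 → eval x f = 0)
    (g : Fin 4 → MvPolynomial (Fin 6) ℂ)
    (hg : ∀ i, (g i).IsHomogeneous 2 ∧
          g i ∈ Set.range (rename (![4, 5] : Fin 2 → Fin 6)))
    (hfg : f - ∑ i : Fin 4, X (Fin.castLE (by norm_num) i) * g i ∈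
        (Ideal.span {X 0, X 1, X 2, X 3} : Ideal (MvPolynomial (Fin 6) ℂ)) ^ 2)
    (e5 : Fin 6 → ℂ) (he5 : e5 = fun i => if i = 5 then 1 else 0)
    (hsing : ∀ i : Fin 6, eval e5 (pderiv i f) = 0) :
    ∀ i : Fin 4, (X 4 : MvPolynomial (Fin 6) ℂ) ∣ g i ∧
      coeff (Finsupp.single (5 : Fin 6) 2) (g i) = 0 := by
  have hsupp : ∀ i, g i ∈ supported ℂ {4, 5} := fun i => by
    obtain ⟨φ, hφ⟩ := (hg i).2
    exact hφ ▸ rename_pair_mem_supported 4 5 φ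
  obtain rfl : e5 = Pi.single 5 1 := he5.trans (funext fun i => (Pi.single_apply 5 1 i).symm)
  rw [← range_X_castLE_four_six] at hfg
  exact g_divisible_by_x4_at_singular_point_general (Fin.castLE_injective _) (by decide)
    (fun i => (hg i).1) hsupp hfg fun _ => hsing _
end
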